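/- The cluster picture Σ_f is almost rational if and only if every proper cluster s ∈ Σ_f satisfies at least one of the following: (a) d_s = ρ_s (equivalently, the smallest disc containing s contains a point of K); (b) there exist w ∈ K and a monic polynomial h with coefficients in the separable closure K^s of K whose set of roots (each of multiplicity one) is exactly {r − w : r ∈ s}, such that deg h = |s| is a power of p and the constant term c of h satisfies |v(c)|_p ≥ 1. -/

import Mathlib

open Polynomial
open scoped Classical

namespace ClusterPicture

variable {K Kbar : Type*} [Field K] [Field Kbar] [Algebra K Kbar]

lemma zero_lt_top' : (0 : WithTop ℚ) < ⊤ := by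
  simp

lemma withTop_add_pos {a b : WithTop ℚ} (ha : 0 ≤ a) (hb : 0 < b) : 0 < a + b := by
  rcases eq_or_ne a ⊤ with h | h
  · subst h; rw [top_add]; exact zero_lt_top'
  · lift a to ℚ using h
    rcases eq_or_ne b ⊤ with h' | h'
    · subst h'; rw [add_top]; exact zero_lt_top'
    · lift b to ℚ using h'
      have ha' : (0 : ℚ) ≤ a := by exact_mod_cast ha
      have hb' : (0 : ℚ) < b := by exact_mod_cast hb
      exact_mod_cast add_pos_of_nonneg_of_pos ha' hb'

/-- The setting of the paper: `K` is a complete discretely valued field, with valuation `v`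
normalised so that `v(K^×) = ℤ`, `Kbar` is an algebraic closure of `K`, and `v` is (the unique)
extension of the valuation to a `ℚ ∪ {∞}`-valued valuation on `Kbar`. -/
structure Setup (K Kbar : Type*) [Field K] [Field Kbar] [Algebra K Kbar] : Type _ where
  /-- the valuation on the algebraic closure -/
  v : Kbar → WithTop ℚ
  v_top_iff : ∀ x : Kbar, v x = ⊤ ↔ x = 0
  v_one : v 1 = 0
  v_neg : ∀ x : Kbar, v (-x) = v x
  v_mul : ∀ x y : Kbar, v (x * y) = v x + v y
  v_add : ∀ x y : Kbar, min (v x) (v y) ≤ v (x + y)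
  /-- the valuation is normalised: nonzero elements of `K` have integer valuation -/
  v_base_int : ∀ x : K, x ≠ 0 → ∃ n : ℤ, v (algebraMap K Kbar x) = ((n : ℚ) : WithTop ℚ)
  /-- the valuation is surjective onto `ℤ` on `K^×`: there is a uniformiser -/
  exists_uniformiser : ∃ π : K, v (algebraMap K Kbar π) = ((1 : ℚ) : WithTop ℚ)
  /-- `Kbar` is an algebraic closure of `K` -/
  algClosed : IsAlgClosed Kbar
  algebraic : Algebra.IsAlgebraic K Kbar
  /-- `K` is complete with respect to the valuation -/
  complete : ∀ a : ℕ → K,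
    (∀ q : ℚ, ∃ N : ℕ, ∀ m, N ≤ m → ∀ n, N ≤ n →
      ((q : ℚ) : WithTop ℚ) ≤ v (algebraMap K Kbar (a m - a n))) →
    ∃ b : K, ∀ q : ℚ, ∃ N : ℕ, ∀ n, N ≤ n →
      ((q : ℚ) : WithTop ℚ) ≤ v (algebraMap K Kbar (a n - b))

/-- Valuation of an element of the base field `K`. -/
def Setup.vK (S : Setup K Kbar) (x : K) : WithTop ℚ := S.v (algebraMap K Kbar x)

/-- The finite set of roots of `f` in the algebraic closure `Kbar`. -/
noncomputable def rootFinset (f : K[X]) : Finset Kbar :=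
  (f.map (algebraMap K Kbar)).roots.toFinset

/-- A cluster for `f`: a nonempty subset of the set of roots of `f` cut out by a `v`-adic disc. -/
def IsCluster (S : Setup K Kbar) (f : K[X]) (s : Finset Kbar) : Prop :=
  s.Nonempty ∧ ∃ (z : Kbar) (δ : ℚ),
    s = (rootFinset f).filter fun r => ((δ : ℚ) : WithTop ℚ) ≤ S.v (r - z)

/-- The depth `d_s = min_{r,r' ∈ s} v (r - r')` of a cluster. -/
noncomputable def depth (S : Setup K Kbar) (s : Finset Kbar) : WithTop ℚ :=
  s.inf fun r => s.inf fun r' => S.v (r - r')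

/-- `min_{r ∈ s} v (r - z)`, for `z ∈ Kbar`. -/
noncomputable def dmin (S : Setup K Kbar) (s : Finset Kbar) (z : Kbar) : WithTop ℚ :=
  s.inf fun r => S.v (r - z)

/-- `min_{r ∈ s} v (r - w)`, for `w ∈ K`. -/
noncomputable def dminK (S : Setup K Kbar) (s : Finset Kbar) (w : K) : WithTop ℚ :=
  dmin S s (algebraMap K Kbar w)

/-- `w ∈ K` is a rational centre of `s` if it maximises `min_{r ∈ s} v (r - w)`.
For a proper cluster `s` with rational centre `w`, the radius `ρ_s` is `dminK S s w`. -/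
def IsRationalCentre (S : Setup K Kbar) (s : Finset Kbar) (w : K) : Prop :=
  ∀ w' : K, dminK S s w' ≤ dminK S s w

/-- A rational cluster: a cluster cut out by a disc with centre in `K`. -/
def IsRationalCluster (S : Setup K Kbar) (f : K[X]) (s : Finset Kbar) : Prop :=
  s.Nonempty ∧ ∃ (w : K) (δ : ℚ),
    s = (rootFinset f).filter fun r => ((δ : ℚ) : WithTop ℚ) ≤ S.v (r - algebraMap K Kbar w)

/-- A cluster centred at `w ∈ K`. -/
def IsClusterCentredAt (S : Setup K Kbar) (f : K[X]) (w : K) (s : Finset Kbar) : Prop :=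
  s.Nonempty ∧ ∃ δ : ℚ,
    s = (rootFinset f).filter fun r => ((δ : ℚ) : WithTop ℚ) ≤ S.v (r - algebraMap K Kbar w)

/-- The cluster picture of `f` is almost rational: every proper cluster `s` with
`|s| > |ρ_s|_p` satisfies `d_s = ρ_s`. -/
def AlmostRational (S : Setup K Kbar) (f : K[X]) (p : ℕ) : Prop :=
  ∀ s : Finset Kbar, IsCluster S f s → 1 < s.card →
    ∀ (w : K) (ρ : ℚ), IsRationalCentre S s w → dminK S s w = ((ρ : ℚ) : WithTop ℚ) →
      padicNorm p ρ < (s.card : ℚ) → depth S s = ((ρ : ℚ) : WithTop ℚ)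

/-- The slope of the `j`-th edge of the polygon with vertices `(i_j, c_j)`. -/
def NPslope {s : ℕ} (i : Fin (s + 1) → ℕ) (c : Fin (s + 1) → ℚ) (j : Fin s) : ℚ :=
  (c j.succ - c j.castSucc) / ((i j.succ : ℚ) - (i j.castSucc : ℚ))

/-- `(i_0, c_0), …, (i_s, c_s)` are the vertices of the Newton polygon of `f`:
the points `(i_j, c_j)` are among the points `(m, v(a_m))`, the first and last vertices lie
above the trailing and leading coefficients, the slopes of consecutive edges strictly
increase, and every point `(m, v(a_m))` lies on or above (the line spanned by) every edge. -/
structure IsNPVertices (S : Setup K Kbar) (f : K[X]) (s : ℕ)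
    (i : Fin (s + 1) → ℕ) (c : Fin (s + 1) → ℚ) : Prop where
  mono : StrictMono i
  first : i 0 = f.natTrailingDegree
  last : i (Fin.last s) = f.natDegree
  vert : ∀ j, S.vK (f.coeff (i j)) = ((c j : ℚ) : WithTop ℚ)
  slope_mono : StrictMono (NPslope i c)
  support : ∀ (j : Fin s) (m : ℕ) (q : ℚ), S.vK (f.coeff m) = ((q : ℚ) : WithTop ℚ) →
    (c j.succ - c j.castSucc) * ((m : ℚ) - (i j.castSucc : ℚ)) ≤
      (q - c j.castSucc) * ((i j.succ : ℚ) - (i j.castSucc : ℚ))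

/-- The valuation ring of `Kbar`. -/
def intRing (S : Setup K Kbar) : Subring Kbar where
  carrier := {x : Kbar | (0 : WithTop ℚ) ≤ S.v x}
  zero_mem' := by
    simp only [Set.mem_setOf_eq, (S.v_top_iff 0).mpr rfl]
    exact le_top
  one_mem' := by
    simp only [Set.mem_setOf_eq, S.v_one]
    exact le_refl _
  add_mem' := by
    intro a b ha hb
    exact le_trans (le_min ha hb) (S.v_add a b)
  mul_mem' := by
    intro a b ha hb
    simp only [Set.mem_setOf_eq, S.v_mul a b]
    exact add_nonneg ha hb
  neg_mem' := by
    intro a ha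
    simpa only [Set.mem_setOf_eq, S.v_neg] using ha

lemma mem_intRing {S : Setup K Kbar} {x : Kbar} :
    x ∈ intRing S ↔ (0 : WithTop ℚ) ≤ S.v x := Iff.rfl

/-- The maximal ideal of the valuation ring of `Kbar`. -/
def maxIdeal (S : Setup K Kbar) : Ideal (intRing S) where
  carrier := {x : intRing S | (0 : WithTop ℚ) < S.v (x : Kbar)}
  zero_mem' := by
    show (0 : WithTop ℚ) < S.v ((0 : intRing S) : Kbar)
    rw [show ((0 : intRing S) : Kbar) = 0 from rfl, (S.v_top_iff 0).mpr rfl]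
    exact zero_lt_top'
  add_mem' := by
    intro a b ha hb
    show (0 : WithTop ℚ) < S.v ((a : Kbar) + (b : Kbar))
    exact lt_of_lt_of_le (lt_min ha hb) (S.v_add _ _)
  smul_mem' := by
    intro c x hx
    show (0 : WithTop ℚ) < S.v ((c : Kbar) * (x : Kbar))
    rw [S.v_mul]
    exact withTop_add_pos c.2 hx

/-- The residue field of `Kbar`; it is an algebraic closure of the residue field `k` of `K`. -/
abbrev Residue (S : Setup K Kbar) : Type _ := intRing S ⧸ maxIdeal S

/-- Reduction to the residue field (with junk value `0` on non-integral elements). -/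
noncomputable def red (S : Setup K Kbar) (x : Kbar) : Residue S :=
  if h : (0 : WithTop ℚ) ≤ S.v x then Ideal.Quotient.mk (maxIdeal S) ⟨x, mem_intRing.mpr h⟩
  else 0

/-- The reduction `f̄|_L` of `f` along the edge `L` of its Newton polygon with endpoints
`(i₁, q₁)` and `(i₂, q₂)`, of slope `ρ = nρ / n` where `n` is the denominator of `ρ`;
`π` is a uniformiser of `K`.  This is the reduction of `π^{-q₁}·(f|_L)(π^{-nρ}·x)`, where
`f|_L (x) = ∑_j a_{n j + i₁} x^j`. -/
noncomputable def redEdge (S : Setup K Kbar) (π : K) (f : K[X])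
    (i₁ i₂ : ℕ) (q₁ nρ : ℤ) (n : ℕ) : Polynomial (Residue S) :=
  ∑ j ∈ Finset.range ((i₂ - i₁) / n + 1),
    Polynomial.C (red S (algebraMap K Kbar (f.coeff (n * j + i₁)) *
      (algebraMap K Kbar π) ^ (-(q₁ + (j : ℤ) * nρ)))) * Polynomial.X ^ j

/-- `f` is NP-regular (`Δ_v`-regular in dimension 1): for every edge `L` of its Newton
polygon, the reduction `f̄|_L` has no multiple roots in the algebraic closure of the residue
field, i.e. is separable. -/
def NPRegular (S : Setup K Kbar) (π : K) (f : K[X]) : Prop :=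
  ∀ (s : ℕ) (i : Fin (s + 1) → ℕ) (c : Fin (s + 1) → ℚ),
    IsNPVertices S f s i c →
    ∀ (j : Fin s) (q₁ nρ : ℤ) (n : ℕ),
      (q₁ : ℚ) = c j.castSucc →
      n = (NPslope i c j).den →
      (nρ : ℚ) = (n : ℚ) * NPslope i c j →
      (redEdge S π f (i j.castSucc) (i j.succ) q₁ nρ n).Separable

/-- The vertex-index function of the Newton polygon of `f(x+w)`, in terms of the sizes of
the clusters `s_1 ⊂ … ⊂ s_{n+1}` centred at `w`; here `t` is the prescribed first index. -/
def vertIdx {n : ℕ} (t : ℕ) (s : Fin (n + 1) → Finset Kbar) : Fin (n + 2) → ℕ :=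
  fun j => Fin.cases (motive := fun _ => ℕ) t (fun j' => (s j').card) j

/-- The vertex-value function of the Newton polygon of `f(x+w)`: the vertex over `|s_j|` has
second coordinate `ε_{s_j} - |s_j|·ρ_{s_j}`; `c0` is the prescribed value at the first vertex. -/
def vertVal {n : ℕ} (c0 : ℚ) (s : Fin (n + 1) → Finset Kbar) (ρ ε : Fin (n + 1) → ℚ) :
    Fin (n + 2) → ℚ :=
  fun j => Fin.cases (motive := fun _ => ℚ) c0 (fun j' => ε j' - ((s j').card : ℚ) * ρ j') j

/-! ### Basic valuation facts -/

/-- The valuation as a Mathlib additive valuation. -/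
noncomputable def Setup.av (S : Setup K Kbar) : AddValuation Kbar (WithTop ℚ) :=
  AddValuation.of S.v ((S.v_top_iff 0).2 rfl) S.v_one S.v_add S.v_mul

lemma Setup.v_zero (S : Setup K Kbar) : S.v 0 = ⊤ := (S.v_top_iff 0).2 rfl

lemma Setup.v_sub_comm (S : Setup K Kbar) (x y : Kbar) : S.v (x - y) = S.v (y - x) := by
  rw [← S.v_neg, neg_sub]

lemma Setup.le_v_add (S : Setup K Kbar) {x y : Kbar} {g : WithTop ℚ} (hx : g ≤ S.v x)
    (hy : g ≤ S.v y) : g ≤ S.v (x + y) := le_trans (le_min hx hy) (S.v_add x y)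

lemma Setup.lt_v_add (S : Setup K Kbar) {x y : Kbar} {g : WithTop ℚ} (hx : g < S.v x)
    (hy : g < S.v y) : g < S.v (x + y) := lt_of_lt_of_le (lt_min hx hy) (S.v_add x y)

lemma Setup.le_v_sub (S : Setup K Kbar) {x y : Kbar} {g : WithTop ℚ} (hx : g ≤ S.v x)
    (hy : g ≤ S.v y) : g ≤ S.v (x - y) := by
  rw [sub_eq_add_neg]; exact S.le_v_add hx (by rwa [S.v_neg])

lemma Setup.lt_v_sub (S : Setup K Kbar) {x y : Kbar} {g : WithTop ℚ} (hx : g < S.v x)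
    (hy : g < S.v y) : g < S.v (x - y) := by
  rw [sub_eq_add_neg]; exact S.lt_v_add hx (by rwa [S.v_neg])

/-- If `v(x-y) > v(y)` then `v(x) = v(y)`. -/
lemma Setup.v_eq_of_lt (S : Setup K Kbar) {x y : Kbar} (h : S.v y < S.v (x - y)) :
    S.v x = S.v y := by
  apply le_antisymm
  · by_contra hc
    push Not at hc
    have := S.lt_v_sub hc h
    simp at this
  · have := S.le_v_add (le_refl (S.v y)) h.le
    simpa using this

lemma Setup.v_prod (S : Setup K Kbar) {ι : Type*} (s : Finset ι) (g : ι → Kbar) :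
    S.v (∏ i ∈ s, g i) = ∑ i ∈ s, S.v (g i) := by
  induction s using Finset.induction_on with
  | empty => simp [S.v_one]
  | insert a s ha ih => rw [Finset.prod_insert ha, Finset.sum_insert ha, S.v_mul, ih]

lemma Setup.v_pow (S : Setup K Kbar) (x : Kbar) (n : ℕ) : S.v (x ^ n) = n • S.v x := by
  induction n with
  | zero => simp [S.v_one]
  | succ n ih => rw [pow_succ, S.v_mul, ih, succ_nsmul]

lemma Setup.exists_v (S : Setup K Kbar) {x : Kbar} (hx : x ≠ 0) :
    ∃ q : ℚ, S.v x = ((q : ℚ) : WithTop ℚ) := by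
  have : S.v x ≠ ⊤ := fun h => hx ((S.v_top_iff x).1 h)
  exact ⟨(S.v x).untop this, (WithTop.coe_untop _ this).symm⟩

lemma Setup.ne_zero_of_v (S : Setup K Kbar) {x : Kbar} {q : ℚ}
    (h : S.v x = ((q : ℚ) : WithTop ℚ)) : x ≠ 0 := by
  rintro rfl
  rw [S.v_zero] at h
  exact WithTop.top_ne_coe h

lemma nsmul_coe (n : ℕ) (q : ℚ) : n • ((q : ℚ) : WithTop ℚ) = (((n : ℚ) * q : ℚ) : WithTop ℚ) := by
  rw [← nsmul_eq_mul, WithTop.coe_nsmul]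

/-! ### Invariance under conjugation, via the spectral norm -/

/-- `2^{-v}`, on values. -/
noncomputable def expv (a : WithTop ℚ) : ℝ :=
  WithTop.recTopCoe (C := fun _ => ℝ) 0 (fun q : ℚ => (2 : ℝ) ^ (-(q : ℝ))) a

lemma expv_top : expv ⊤ = 0 := rfl
lemma expv_coe (q : ℚ) : expv ((q : ℚ) : WithTop ℚ) = (2 : ℝ) ^ (-(q : ℝ)) := rfl

lemma expv_nonneg (a : WithTop ℚ) : 0 ≤ expv a := by
  induction a using WithTop.recTopCoe with
  | top => exact le_refl _
  | coe q => rw [expv_coe]; positivity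

lemma expv_add (a b : WithTop ℚ) : expv (a + b) = expv a * expv b := by
  induction a using WithTop.recTopCoe with
  | top => simp [expv_top]
  | coe q =>
    induction b using WithTop.recTopCoe with
    | top => simp [expv_top]
    | coe r =>
      rw [← WithTop.coe_add, expv_coe, expv_coe, expv_coe, ← Real.rpow_add (by norm_num)]
      congr 1; push_cast; ring

lemma expv_le {a b : WithTop ℚ} : expv a ≤ expv b ↔ b ≤ a := by
  induction a using WithTop.recTopCoe with
  | top => simp [expv_top, expv_nonneg]
  | coe q =>
    induction b using WithTop.recTopCoe with
    | top =>
      have : (0 : ℝ) < (2 : ℝ) ^ (-(q : ℝ)) := by positivity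
      simp [expv_top, expv_coe, this]
    | coe r =>
      rw [expv_coe, expv_coe, Real.rpow_le_rpow_left_iff (by norm_num), WithTop.coe_le_coe]
      simp

lemma expv_inj {a b : WithTop ℚ} (h : expv a = expv b) : a = b :=
  le_antisymm (expv_le.1 h.ge) (expv_le.1 h.le)

lemma expv_max (S : Setup K Kbar) (x y : Kbar) :
    expv (S.v (x + y)) ≤ max (expv (S.v x)) (expv (S.v y)) := by
  rcases le_total (S.v x) (S.v y) with h | h
  · exact le_max_of_le_left (expv_le.2 (S.le_v_add le_rfl h))
  · exact le_max_of_le_right (expv_le.2 (S.le_v_add h le_rfl))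

/-- The absolute value attached to `v`. -/
noncomputable def absv (S : Setup K Kbar) : AbsoluteValue Kbar ℝ where
  toFun x := expv (S.v x)
  map_mul' x y := by rw [S.v_mul, expv_add]
  nonneg' x := expv_nonneg _
  eq_zero' x := by
    constructor
    · intro h
      exact (S.v_top_iff x).1 (expv_inj (h.trans expv_top.symm))
    · rintro rfl
      rw [S.v_zero, expv_top]
  add_le' x y := (expv_max S x y).trans
    (max_le_add_of_nonneg (expv_nonneg _) (expv_nonneg _))

lemma absv_apply (S : Setup K Kbar) (x : Kbar) : absv S x = expv (S.v x) := rfl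

/-- Conjugate elements have the same valuation. -/
theorem v_eq_of_minpoly (S : Setup K Kbar) {x y : Kbar} (h : minpoly K x = minpoly K y) :
    S.v x = S.v y := by
  let aK : AbsoluteValue K ℝ := (absv S).comp (algebraMap K Kbar).injective
  have aK_apply : ∀ x : K, aK x = expv (S.v (algebraMap K Kbar x)) := fun _ => rfl
  let nf : NormedField K := aK.toNormedField
  have norm_def : ∀ x : K, ‖x‖ = expv (S.v (algebraMap K Kbar x)) := fun _ => rfl
  let : NontriviallyNormedField K :=
    { nf with
      non_trivial := by
        obtain ⟨π, hπ⟩ := S.exists_uniformiser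
        refine ⟨π⁻¹, ?_⟩
        have h1 : ‖π‖ = 1 / 2 := by
          rw [norm_def, hπ, expv_coe]
          rw [Rat.cast_one, Real.rpow_neg_one]; norm_num
        have h2 : ‖π⁻¹‖ = ‖π‖⁻¹ := norm_inv π
        rw [h2, h1]; norm_num }
  have : IsUltrametricDist K := by
    apply IsUltrametricDist.isUltrametricDist_of_isNonarchimedean_norm
    intro x y
    simp only [norm_def, map_add]
    exact expv_max S _ _
  have : Algebra.IsAlgebraic K Kbar := S.algebraic
  have : CompleteSpace K := by
    apply Metric.complete_of_cauchySeq_tendsto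
    intro u hu
    rw [Metric.cauchySeq_iff] at hu
    obtain ⟨b, hb⟩ := S.complete u (by
      intro q
      obtain ⟨N, hN⟩ := hu ((2 : ℝ) ^ (-(q : ℝ))) (by positivity)
      refine ⟨N, fun m hm n hn => ?_⟩
      have := hN m hm n hn
      rw [dist_eq_norm, norm_def, ← expv_coe] at this
      exact expv_le.1 this.le)
    refine ⟨b, ?_⟩
    rw [Metric.tendsto_atTop]
    intro ε hε
    obtain ⟨k, hk⟩ := exists_pow_lt_of_lt_one hε (by norm_num : (1 / 2 : ℝ) < 1)
    obtain ⟨N, hN⟩ := hb (k : ℚ)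
    refine ⟨N, fun n hn => lt_of_le_of_lt ?_ hk⟩
    rw [dist_eq_norm, norm_def]
    refine (expv_le.2 (hN n hn)).trans (le_of_eq ?_)
    rw [expv_coe, Rat.cast_natCast, Real.rpow_neg (by norm_num), Real.rpow_natCast]
    simp
  have key := fun z : Kbar => spectralNorm_unique_field_norm_ext (K := K) (L := Kbar)
    (f := absv S) (fun x => (norm_def x).symm) z
  apply expv_inj
  rw [← absv_apply, ← absv_apply, key x, key y]
  unfold spectralNorm
  rw [h]

/-! ### Residues on a Galois extension `N` of `K` inside `Kbar` -/

section Galois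

variable (S : Setup K Kbar) (N : IntermediateField K Kbar)

lemma v_conj (σ : N ≃ₐ[K] N) (x : N) : S.v ((σ x : N) : Kbar) = S.v (x : Kbar) := by
  apply v_eq_of_minpoly
  have h1 : ∀ y : N, minpoly K ((y : N) : Kbar) = minpoly K y := fun y =>
    minpoly.algebraMap_eq (algebraMap N Kbar).injective y
  rw [h1, h1, minpoly.algEquiv_eq]

/-- The valuation ring of `N`. -/
def ON : Subring N := (intRing S).comap (algebraMap N Kbar)

lemma mem_ON {x : N} : x ∈ ON S N ↔ 0 ≤ S.v (x : Kbar) := Iff.rfl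

/-- Reduction on the valuation ring of `N`. -/
noncomputable def rs : ON S N →+* Residue S :=
  (Ideal.Quotient.mk (maxIdeal S)).comp
    ((algebraMap N Kbar).restrict (ON S N) (intRing S) (fun _ hx => hx))

lemma rs_eq_zero (x : ON S N) : rs S N x = 0 ↔ 0 < S.v ((x : N) : Kbar) := by
  unfold rs
  rw [RingHom.comp_apply, Ideal.Quotient.eq_zero_iff_mem]
  exact Iff.rfl

lemma rs_eq (x y : ON S N) :
    rs S N x = rs S N y ↔ 0 < S.v (((x : N) : Kbar) - ((y : N) : Kbar)) := by
  rw [← sub_eq_zero, ← map_sub, rs_eq_zero]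
  simp

lemma maxIdeal_isPrime : (maxIdeal S).IsPrime := by
  constructor
  · rw [Ideal.ne_top_iff_one]
    intro h
    have h' : (0 : WithTop ℚ) < S.v 1 := h
    rw [S.v_one] at h'
    exact lt_irrefl _ h'
  · intro x y hxy
    by_contra hc
    push Not at hc
    obtain ⟨hx, hy⟩ := hc
    have hx' : ¬ (0 : WithTop ℚ) < S.v (x : Kbar) := hx
    have hy' : ¬ (0 : WithTop ℚ) < S.v (y : Kbar) := hy
    have h1 : S.v (x : Kbar) = 0 := le_antisymm (not_lt.1 hx') x.2
    have h2 : S.v (y : Kbar) = 0 := le_antisymm (not_lt.1 hy') y.2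
    have h3 : (0 : WithTop ℚ) < S.v ((x : Kbar) * (y : Kbar)) := hxy
    rw [S.v_mul, h1, h2, add_zero] at h3
    exact lt_irrefl _ h3

instance : IsDomain (Residue S) := by
  have := maxIdeal_isPrime S
  exact Ideal.Quotient.isDomain (maxIdeal S)

lemma residue_p {p : ℕ} (hres : ((0 : ℚ) : WithTop ℚ) < S.vK (p : K)) :
    ((p : ℕ) : Residue S) = 0 := by
  have : ((p : ℕ) : Residue S) = Ideal.Quotient.mk (maxIdeal S) (p : intRing S) := by simp
  rw [this, Ideal.Quotient.eq_zero_iff_mem]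
  show (0 : WithTop ℚ) < S.v ((p : intRing S) : Kbar)
  unfold Setup.vK at hres
  simpa using hres

lemma residue_charP {p : ℕ} (hp : p.Prime) (hres : ((0 : ℚ) : WithTop ℚ) < S.vK (p : K)) :
    CharP (Residue S) p := by
  have h := residue_p S hres
  obtain ⟨q, hq⟩ := CharP.exists (Residue S)
  have hqp : q ∣ p := (CharP.cast_eq_zero_iff (Residue S) q p).1 h
  rcases (Nat.dvd_prime hp).1 hqp with h1 | h1
  · exact absurd h1 (CharP.char_ne_one (Residue S) q)
  · rwa [h1] at hq

lemma pow_p_inj {p : ℕ} (hp : p.Prime) (hres : ((0 : ℚ) : WithTop ℚ) < S.vK (p : K))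
    (k : ℕ) {a b : Residue S} (h : a ^ p ^ k = b ^ p ^ k) : a = b := by
  have := residue_charP S hp hres
  have : Fact p.Prime := ⟨hp⟩
  have : (a - b) ^ p ^ k = 0 := by rw [sub_pow_char_pow, h, sub_self]
  exact sub_eq_zero.1 (pow_eq_zero_iff (pow_ne_zero _ hp.ne_zero) |>.1 this)

/-- The Galois action on the valuation ring. -/
def act (σ : N ≃ₐ[K] N) : ON S N →+* ON S N :=
  (σ : N →+* N).restrict (ON S N) (ON S N) (fun x hx => by
    rw [mem_ON] at hx ⊢
    rw [← v_conj S N σ x] at hx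
    exact hx)

@[simp] lemma act_coe (σ : N ≃ₐ[K] N) (x : ON S N) : ((act S N σ x : ON S N) : N) = σ (x : N) := rfl

lemma act_mul (σ τ : N ≃ₐ[K] N) (x : ON S N) : act S N (σ * τ) x = act S N σ (act S N τ x) := rfl

lemma act_congr (σ : N ≃ₐ[K] N) {x y : ON S N} (h : rs S N x = rs S N y) :
    rs S N (act S N σ x) = rs S N (act S N σ y) := by
  rw [rs_eq] at h ⊢
  have := v_conj S N σ ((x : N) - (y : N))
  rw [map_sub] at this
  push_cast at this
  simp only [act_coe]
  rwa [this]

/-- The inertia group. -/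
def inertia : Subgroup (N ≃ₐ[K] N) where
  carrier := {σ | ∀ x : ON S N, rs S N (act S N σ x) = rs S N x}
  one_mem' := fun x => rfl
  mul_mem' := by
    intro σ τ hσ hτ x
    rw [act_mul, hσ, hτ]
  inv_mem' := by
    intro σ hσ x
    have := hσ (act S N σ⁻¹ x)
    rw [← act_mul, mul_inv_cancel] at this
    exact this.symm

lemma mem_inertia {σ : N ≃ₐ[K] N} :
    σ ∈ inertia S N ↔ ∀ x : ON S N, rs S N (act S N σ x) = rs S N x := Iff.rfl

lemma v_ratio (σ : N ≃ₐ[K] N) {y : N} (hy : y ≠ 0) : S.v ((σ y / y : N) : Kbar) = 0 := by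
  have hy' : (y : Kbar) ≠ 0 := by simpa using hy
  obtain ⟨q, hq⟩ := S.exists_v hy'
  have h : S.v ((σ y / y : N) : Kbar) + S.v (y : Kbar) = S.v (y : Kbar) := by
    rw [← S.v_mul]
    push_cast
    rw [div_mul_cancel₀ _ hy', v_conj]
  have hne : ((σ y / y : N) : Kbar) ≠ 0 := by
    have : σ y / y ≠ 0 := div_ne_zero (by simpa using hy) hy
    simpa using this
  obtain ⟨q', hq'⟩ := S.exists_v hne
  rw [hq, hq'] at h
  rw [hq']
  norm_cast at h ⊢
  linarith

/-- `σ(y)/y`, as an element of the valuation ring. -/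
def ratio (σ : N ≃ₐ[K] N) {y : N} (hy : y ≠ 0) : ON S N :=
  ⟨σ y / y, by rw [mem_ON, v_ratio S N σ hy]⟩

lemma ratio_coe (σ : N ≃ₐ[K] N) {y : N} (hy : y ≠ 0) : ((ratio S N σ hy : ON S N) : N) = σ y / y :=
  rfl

lemma ratio_mul (σ τ : N ≃ₐ[K] N) {y : N} (hy : y ≠ 0) :
    ratio S N (σ * τ) hy = act S N σ (ratio S N τ hy) * ratio S N σ hy := by
  apply Subtype.ext
  have : σ y ≠ 0 := by simpa using hy
  simp only [ratio_coe, Subring.coe_mul, act_coe, map_div₀, AlgEquiv.mul_apply]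
  field_simp

/-- The tame character attached to `y`. -/
noncomputable def chi {y : N} (hy : y ≠ 0) : inertia S N →* Residue S where
  toFun σ := rs S N (ratio S N σ hy)
  map_one' := by
    have : ratio S N ((1 : inertia S N) : N ≃ₐ[K] N) hy = 1 := by
      apply Subtype.ext
      simp [ratio_coe, hy]
    rw [this, map_one]
  map_mul' σ τ := by
    rw [Subgroup.coe_mul, ratio_mul, map_mul, σ.2, mul_comm]

lemma chi_apply {y : N} (hy : y ≠ 0) (σ : inertia S N) :
    chi S N hy σ = rs S N (ratio S N σ hy) := rfl

lemma rs_ratio_eq_one (σ : N ≃ₐ[K] N) {y : N} (hy : y ≠ 0) :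
    rs S N (ratio S N σ hy) = 1 ↔ S.v (y : Kbar) < S.v ((σ y : N) - (y : Kbar)) := by
  have hy' : (y : Kbar) ≠ 0 := by simpa using hy
  rw [← map_one (rs S N), rs_eq, ratio_coe]
  have h1 : ((σ y : N) : Kbar) - (y : Kbar)
      = (((σ y / y : N) : Kbar) - (((1 : ON S N) : N) : Kbar)) * (y : Kbar) := by
    push_cast
    field_simp
  rw [h1, S.v_mul]
  obtain ⟨q, hq⟩ := S.exists_v hy'
  rw [hq]
  generalize S.v (((σ y / y : N) : Kbar) - (((1 : ON S N) : N) : Kbar)) = a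
  induction a using WithTop.recTopCoe with
  | top => simp
  | coe a => 
    norm_cast
    constructor <;> intro h <;> linarith

/-- Elements of inertia of `p`-power order are wild. -/
lemma wild {p : ℕ} (hp : p.Prime) (hres : ((0 : ℚ) : WithTop ℚ) < S.vK (p : K))
    (σ : inertia S N) (k : ℕ) (hσ : σ ^ p ^ k = 1) {y : N} (hy : y ≠ 0) :
    chi S N hy σ = 1 := by
  apply pow_p_inj S hp hres k
  rw [← map_pow, hσ, map_one, one_pow]

/-- There is a subgroup of wild inertia which is large enough. -/
lemma exists_Q [FiniteDimensional K N] {p : ℕ} (hp : p.Prime) :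
    ∃ Q : Subgroup (N ≃ₐ[K] N), Q ≤ inertia S N ∧ IsPGroup p Q ∧
      ∃ e : ℕ, ¬ p ∣ e ∧ Nat.card (inertia S N) = Nat.card Q * e := by
  have : Fact p.Prime := ⟨hp⟩
  obtain ⟨Q0⟩ : Nonempty (Sylow p (inertia S N)) := inferInstance
  refine ⟨(Q0 : Subgroup (inertia S N)).map (inertia S N).subtype, ?_, ?_,
    (Q0 : Subgroup (inertia S N)).index, Q0.not_dvd_index, ?_⟩
  · exact Subgroup.map_subtype_le _
  · exact Q0.2.map _
  · rw [← (Q0 : Subgroup (inertia S N)).card_mul_index]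
    congr 1
    exact (Subgroup.card_map_of_injective (inertia S N).subtype_injective).symm

end Galois

section Core

variable (S : Setup K Kbar) (N : IntermediateField K Kbar)

lemma card_fiber {G : Type*} [Group G] (Q I : Subgroup G) (hQI : Q ≤ I) :
    Nat.card I = Nat.card {q : G ⧸ Q // q.out ∈ I} * Nat.card Q := by
  have hout : ∀ g : G, ((g : G ⧸ Q).out)⁻¹ * g ∈ Q := fun g =>
    QuotientGroup.eq.1 (QuotientGroup.out_eq' (g : G ⧸ Q))
  have hmem : ∀ g : G, g ∈ I → ((g : G ⧸ Q).out) ∈ I := by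
    intro g hg
    have h := I.mul_mem hg (I.inv_mem (hQI (hout g)))
    simpa using h
  rw [← Nat.card_prod]
  refine Nat.card_congr
    { toFun := fun i => (⟨((i : G) : G ⧸ Q), hmem i i.2⟩, ⟨((i : G) : G ⧸ Q).out⁻¹ * i, hout i⟩)
      invFun := fun x => ⟨x.1.1.out * x.2.1, I.mul_mem x.1.2 (hQI x.2.2)⟩
      left_inv := ?_
      right_inv := ?_ }
  · intro i
    apply Subtype.ext
    simp
  · rintro ⟨⟨q, hq⟩, ⟨τ, hτ⟩⟩
    have h1 : ((q.out * τ : G) : G ⧸ Q) = q := by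
      rw [QuotientGroup.mk_mul_of_mem _ hτ, QuotientGroup.out_eq']
    apply Prod.ext
    · apply Subtype.ext
      exact h1
    · apply Subtype.ext
      simp only [h1]
      group

lemma int_of_chi_trivial [FiniteDimensional K N] [IsGalois K N] {p : ℕ} (hp : p.Prime)
    (hres : ((0 : ℚ) : WithTop ℚ) < S.vK (p : K))
    (Q : Subgroup (N ≃ₐ[K] N)) (hQI : Q ≤ inertia S N) (hQ : IsPGroup p Q) (e : ℕ)
    (he : ¬ p ∣ e) (hcard : Nat.card (inertia S N) = Nat.card Q * e)
    {Y : N} (hY : Y ≠ 0) (hYQ : ∀ σ ∈ Q, σ Y = Y) (hchi : ∀ σ, chi S N hY σ = 1) :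
    ∃ n : ℤ, S.v (Y : Kbar) = ((n : ℚ) : WithTop ℚ) := by
  have : Fact p.Prime := ⟨hp⟩
  have := residue_charP S hp hres
  obtain ⟨k, hk⟩ := IsPGroup.iff_card.1 hQ
  have : Fintype Q := Fintype.ofFinite Q
  have : Fintype ((N ≃ₐ[K] N) ⧸ Q) := Fintype.ofFinite _
  have hkQ : Fintype.card Q = p ^ k := by rw [← Nat.card_eq_fintype_card, hk]
  -- the characters
  let ψ : ((N ≃ₐ[K] N) ⧸ Q) → (ON S N →* Residue S) := fun q =>
    (powMonoidHom (p ^ k)).comp ((rs S N).comp (act S N q.out) : ON S N →* Residue S)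
  have ψ_apply : ∀ q u, ψ q u = (rs S N (act S N q.out u)) ^ p ^ k := fun _ _ => rfl
  let ε : ((N ≃ₐ[K] N) ⧸ Q) → Residue S := fun q => rs S N (ratio S N q.out hY)
  -- some `u` with nonzero sum
  have hex : ∃ u : ON S N, ∑ q, ε q * ψ q u ≠ 0 := by
    by_contra hc
    push Not at hc
    let q0 : (N ≃ₐ[K] N) ⧸ Q := ((1 : N ≃ₐ[K] N) : (N ≃ₐ[K] N) ⧸ Q)
    have hq0 : q0.out ∈ inertia S N := by
      apply hQI
      have := QuotientGroup.eq.1 (QuotientGroup.out_eq' q0)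
      simpa using this
    have hfib : ∀ q, ψ q = ψ q0 ↔ q.out ∈ inertia S N := by
      intro q
      constructor
      · intro h u
        have h1 : ψ q u = ψ q0 u := by rw [h]
        rw [ψ_apply, ψ_apply] at h1
        rw [pow_p_inj S hp hres k h1]
        exact hq0 u
      · intro h
        apply MonoidHom.ext
        intro u
        rw [ψ_apply, ψ_apply, h u, hq0 u]
    have hli := linearIndependent_monoidHom (ON S N) (Residue S)
    rw [linearIndependent_iff'] at hli
    have h0 := hli (Finset.univ.image ψ)
      (fun φ => ∑ q ∈ Finset.univ.filter (fun q => ψ q = φ), ε q) (by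
        funext u
        rw [Finset.sum_apply]
        have h2 := hc u
        rw [← Finset.sum_fiberwise_of_maps_to (t := Finset.univ.image ψ) (g := ψ)
          (fun q _ => Finset.mem_image_of_mem ψ (Finset.mem_univ q))] at h2
        rw [Pi.zero_apply, ← h2]
        apply Finset.sum_congr rfl
        intro φ _
        rw [Pi.smul_apply, smul_eq_mul, Finset.sum_mul]
        apply Finset.sum_congr rfl
        intro q hq
        rw [(Finset.mem_filter.1 hq).2]) (ψ q0)
      (Finset.mem_image_of_mem ψ (Finset.mem_univ q0))
    have h1 : ∀ q ∈ Finset.univ.filter (fun q => ψ q = ψ q0), ε q = 1 := by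
      intro q hq
      have hq' := (hfib q).1 (Finset.mem_filter.1 hq).2
      exact hchi ⟨q.out, hq'⟩
    rw [Finset.sum_congr rfl h1, Finset.sum_const, nsmul_eq_mul, mul_one] at h0
    have h2 : (Finset.univ.filter (fun q => ψ q = ψ q0)).card = e := by
      have h3 := card_fiber Q (inertia S N) hQI
      rw [hcard, mul_comm] at h3
      have h4 := Nat.eq_of_mul_eq_mul_right Nat.card_pos h3
      rw [h4, Nat.card_eq_fintype_card, Fintype.card_subtype]
      congr 1
      ext q
      simp [hfib]
    rw [h2] at h0
    exact he ((CharP.cast_eq_zero_iff (Residue S) p e).1 h0)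
  obtain ⟨u, hu⟩ := hex
  let U : ON S N := ∏ τ : Q, act S N τ u
  have hUQ : ∀ σ ∈ Q, σ (U : N) = U := by
    intro σ hσ
    have : act S N σ U = U := by
      simp only [U, map_prod, ← act_mul]
      exact Fintype.prod_equiv (Equiv.mulLeft (⟨σ, hσ⟩ : Q)) _ _ (fun τ => rfl)
    exact congrArg Subtype.val this
  have hrU : ∀ q, rs S N (act S N (Quotient.out q) U) = ψ q u := by
    intro q
    rw [ψ_apply]
    simp only [U, map_prod]
    rw [Finset.prod_congr rfl (g := fun _ => rs S N (act S N q.out u)), Finset.prod_const,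
      Finset.card_univ, hkQ]
    intro τ _
    exact act_congr S N _ (hQI τ.2 u)
  let W : N := U * Y
  have hWQ : ∀ σ ∈ Q, σ W = W := by
    intro σ hσ
    simp only [W, map_mul, hUQ σ hσ, hYQ σ hσ]
  let F : ((N ≃ₐ[K] N) ⧸ Q) → N := fun q => q.out W
  have hF : ∀ g : N ≃ₐ[K] N, F (g : (N ≃ₐ[K] N) ⧸ Q) = g W := by
    intro g
    have h1 : ((g : (N ≃ₐ[K] N) ⧸ Q).out)⁻¹ * g ∈ Q :=
      QuotientGroup.eq.1 (QuotientGroup.out_eq' (g : (N ≃ₐ[K] N) ⧸ Q))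
    have h2 := hWQ _ h1
    have h3 := congrArg (g : (N ≃ₐ[K] N) ⧸ Q).out h2
    rw [← AlgEquiv.mul_apply, mul_inv_cancel_left] at h3
    exact h3.symm
  let z : N := ∑ q, F q
  have hz : ∀ σ : N ≃ₐ[K] N, σ z = z := by
    intro σ
    simp only [z, map_sum]
    refine Fintype.sum_equiv (MulAction.toPerm σ) _ _ (fun q => ?_)
    obtain ⟨g, rfl⟩ := QuotientGroup.mk_surjective q
    rw [hF, MulAction.toPerm_apply, MulAction.Quotient.smul_mk, hF]
    rfl
  obtain ⟨z0, hz0⟩ := (IsGalois.mem_range_algebraMap_iff_fixed z).2 hz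
  let T : ON S N := ∑ q : (N ≃ₐ[K] N) ⧸ Q, act S N (Quotient.out q) U * ratio S N (Quotient.out q) hY
  have hT : rs S N T ≠ 0 := by
    have : rs S N T = ∑ q, ε q * ψ q u := by
      simp only [T, map_sum, map_mul, hrU]
      exact Finset.sum_congr rfl (fun q _ => mul_comm _ _)
    rwa [this]
  have hzT : z = (T : N) * Y := by
    simp only [T, z, F, W]
    rw [AddSubmonoidClass.coe_finsetSum, Finset.sum_mul]
    apply Finset.sum_congr rfl
    intro q _
    rw [Subring.coe_mul, act_coe, ratio_coe, map_mul]
    field_simp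
  have hvT : S.v ((T : N) : Kbar) = 0 := by
    apply le_antisymm
    · by_contra h
      push Not at h
      exact hT ((rs_eq_zero S N T).2 h)
    · exact T.2
  have hvz : S.v (z : Kbar) = S.v (Y : Kbar) := by
    rw [hzT]
    push_cast
    rw [S.v_mul, hvT, zero_add]
  have hvz0 : S.v (algebraMap K Kbar z0) = S.v (Y : Kbar) := by
    rw [← hvz, ← hz0]; rfl
  have hz0ne : z0 ≠ 0 := by
    rintro rfl
    rw [map_zero, S.v_zero] at hvz0
    have := (S.v_top_iff _).1 hvz0.symm
    exact hY (by simpa using this)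
  obtain ⟨n, hn⟩ := S.v_base_int z0 hz0ne
  exact ⟨n, by rw [← hvz0, hn]⟩

lemma padicNorm_le_of_fixed [FiniteDimensional K N] [IsGalois K N] {p : ℕ} (hp : p.Prime)
    (hres : ((0 : ℚ) : WithTop ℚ) < S.vK (p : K))
    (Q : Subgroup (N ≃ₐ[K] N)) (hQI : Q ≤ inertia S N) (hQ : IsPGroup p Q) (e : ℕ)
    (he : ¬ p ∣ e) (hcard : Nat.card (inertia S N) = Nat.card Q * e)
    {y : N} (hy : y ≠ 0) (hyQ : ∀ σ ∈ Q, σ y = y) {c : ℚ}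
    (hc : S.v (y : Kbar) = ((c : ℚ) : WithTop ℚ)) : padicNorm p c ≤ 1 := by
  have : Fact p.Prime := ⟨hp⟩
  obtain ⟨k, hk⟩ := IsPGroup.iff_card.1 hQ
  have hY : y ^ e ≠ 0 := pow_ne_zero _ hy
  obtain ⟨n, hn⟩ := int_of_chi_trivial S N hp hres Q hQI hQ e he hcard hY
    (fun σ hσ => by rw [map_pow, hyQ σ hσ]) (fun σ => by
      have h1 : chi S N hY σ = chi S N hy σ ^ e := by
        rw [chi_apply, chi_apply, ← map_pow]
        congr 1
        apply Subtype.ext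
        simp [ratio_coe, div_pow]
      rw [h1]
      apply pow_p_inj S hp hres k
      rw [← pow_mul, mul_comm, ← hk, ← hcard, ← map_pow, pow_card_eq_one', map_one, one_pow])
  have h2 : (e : ℚ) * c = n := by
    push_cast at hn
    rw [S.v_pow, hc, nsmul_coe] at hn
    exact_mod_cast hn
  have h3 : padicNorm p (e : ℚ) = 1 := (padicNorm.nat_eq_one_iff e).2 he
  calc padicNorm p c = padicNorm p ((e : ℚ) * c) := by rw [padicNorm.mul, h3, one_mul]
    _ = padicNorm p (n : ℚ) := by rw [h2]
    _ ≤ 1 := padicNorm.of_int n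

end Core

/-! ### Clusters -/

section Clusters

variable (S : Setup K Kbar)

lemma depth_le (s : Finset Kbar) {r r' : Kbar} (hr : r ∈ s) (hr' : r' ∈ s) :
    depth S s ≤ S.v (r - r') :=
  (Finset.inf_le hr).trans (Finset.inf_le (f := fun r' => S.v (r - r')) hr')

lemma le_depth (s : Finset Kbar) {a : WithTop ℚ} (h : ∀ r ∈ s, ∀ r' ∈ s, a ≤ S.v (r - r')) :
    a ≤ depth S s :=
  Finset.le_inf fun r hr => Finset.le_inf fun r' hr' => h r hr r' hr'

lemma dmin_le (s : Finset Kbar) (z : Kbar) {r : Kbar} (hr : r ∈ s) : dmin S s z ≤ S.v (r - z) :=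
  Finset.inf_le (f := fun r => S.v (r - z)) hr

lemma dmin_le_depth (s : Finset Kbar) (z : Kbar) : dmin S s z ≤ depth S s := by
  apply le_depth
  intro r hr r' hr'
  have := S.le_v_sub (dmin_le S s z hr) (dmin_le S s z hr')
  simpa using this

lemma v_eq_dmin (s : Finset Kbar) (z : Kbar) (h : dmin S s z < depth S s) {r : Kbar}
    (hr : r ∈ s) : S.v (r - z) = dmin S s z := by
  obtain ⟨r0, hr0, h0⟩ := Finset.exists_mem_eq_inf s ⟨r, hr⟩ (fun r => S.v (r - z))
  have h0' : dmin S s z = S.v (r0 - z) := h0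
  rw [h0']
  apply S.v_eq_of_lt
  rw [← h0', sub_sub_sub_cancel_right]
  exact h.trans_le (depth_le S s hr hr0)

lemma depth_exists (s : Finset Kbar) (hs : 1 < s.card) :
    ∃ D : ℚ, depth S s = ((D : ℚ) : WithTop ℚ) := by
  obtain ⟨a, ha, b, hb, hab⟩ := Finset.one_lt_card.1 hs
  obtain ⟨q, hq⟩ := S.exists_v (sub_ne_zero.2 hab)
  have h1 : depth S s ≤ ((q : ℚ) : WithTop ℚ) := hq ▸ depth_le S s ha hb
  have h2 : depth S s ≠ ⊤ := by
    intro h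
    rw [h] at h1
    exact absurd h1 (by simp)
  exact ⟨(depth S s).untop h2, (WithTop.coe_untop _ h2).symm⟩

lemma mem_rootFinset {f : K[X]} (hf : f ≠ 0) {r : Kbar} : r ∈ rootFinset f ↔ aeval r f = 0 := by
  unfold rootFinset
  rw [Multiset.mem_toFinset, mem_roots (map_ne_zero hf), IsRoot.def, eval_map, aeval_def]

lemma exists_N (S : Setup K Kbar) {f : K[X]} (hsep : f.Separable) :
    ∃ N : IntermediateField K Kbar, FiniteDimensional K N ∧ IsGalois K N ∧
      ∀ r ∈ rootFinset (Kbar := Kbar) f, r ∈ N := by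
  have := S.algClosed
  have hsplit : (f.map (algebraMap K Kbar)).Splits := IsAlgClosed.splits _
  have := IntermediateField.adjoin_rootSet_isSplittingField hsplit
  refine ⟨IntermediateField.adjoin K (f.rootSet Kbar),
    Polynomial.IsSplittingField.finiteDimensional _ f,
    IsGalois.of_separable_splitting_field hsep, ?_⟩
  intro r hr
  apply IntermediateField.subset_adjoin
  rw [mem_rootFinset hsep.ne_zero] at hr
  rw [mem_rootSet]
  exact ⟨hsep.ne_zero, hr⟩

lemma conj_root {f : K[X]} (hf : f ≠ 0) (N : IntermediateField K Kbar) (σ : N ≃ₐ[K] N) {x : N}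
    (hx : (x : Kbar) ∈ rootFinset f) : ((σ x : N) : Kbar) ∈ rootFinset f := by
  rw [mem_rootFinset hf] at hx ⊢
  have h1 : ∀ y : N, aeval (y : Kbar) f = ((aeval y f : N) : Kbar) := fun y =>
    aeval_algebraMap_apply Kbar y f
  rw [h1] at hx ⊢
  have hx' : aeval x f = 0 := by simpa using hx
  have : aeval (σ x) f = σ (aeval x f) := by
    have := aeval_algHom_apply (σ : N →ₐ[K] N) x f
    simpa using this
  rw [this, hx']
  simp

lemma denom (N : IntermediateField K Kbar) [FiniteDimensional K N] [IsGalois K N] {x : N}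
    {q : ℚ} (hq : S.v (x : Kbar) = ((q : ℚ) : WithTop ℚ)) :
    ∃ n : ℤ, ((Fintype.card (N ≃ₐ[K] N) : ℕ) : ℚ) * q = n := by
  have hx : x ≠ 0 := by
    rintro rfl
    exact S.ne_zero_of_v hq rfl
  have h1 := Algebra.norm_eq_prod_automorphisms K x
  have hne : Algebra.norm K x ≠ 0 := Algebra.norm_ne_zero_iff.2 hx
  obtain ⟨n, hn⟩ := S.v_base_int _ hne
  refine ⟨n, ?_⟩
  have h2 : algebraMap K Kbar (Algebra.norm K x) = ∏ σ : N ≃ₐ[K] N, ((σ x : N) : Kbar) := by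
    have h3 := congrArg (fun y : N => (y : Kbar)) h1
    push_cast at h3
    exact h3
  rw [h2, S.v_prod] at hn
  simp only [v_conj, hq, Finset.sum_const, Finset.card_univ] at hn
  rw [nsmul_coe] at hn
  exact_mod_cast hn

lemma exists_centre {f : K[X]} (hsep : f.Separable) (s : Finset Kbar)
    (hsub : s ⊆ rootFinset f) (hs : 1 < s.card) (hna : ¬ ∃ w : K, dminK S s w = depth S s) :
    ∃ (w : K) (ρ : ℚ), IsRationalCentre S s w ∧ dminK S s w = ((ρ : ℚ) : WithTop ℚ) := by
  obtain ⟨N, hfd, hgal, hN⟩ := exists_N S hsep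
  obtain ⟨r, hr⟩ : s.Nonempty := Finset.card_pos.1 (by omega)
  obtain ⟨D, hD⟩ := depth_exists S s hs
  have hlt : ∀ w : K, dminK S s w < depth S s := fun w =>
    lt_of_le_of_ne (dmin_le_depth S s _) (fun h => hna ⟨w, h⟩)
  have hdm : ∀ w : K, S.v (r - algebraMap K Kbar w) = dminK S s w := fun w =>
    v_eq_dmin S s _ (hlt w) hr
  have hfin : ∀ w : K, ∃ q : ℚ, dminK S s w = ((q : ℚ) : WithTop ℚ) := fun w => by
    have h2 : dminK S s w ≠ ⊤ := (hlt w).ne_top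
    exact ⟨_, (WithTop.coe_untop _ h2).symm⟩
  set c : ℕ := Fintype.card (N ≃ₐ[K] N) with hc
  have hcpos : (0 : ℚ) < c := by exact_mod_cast Fintype.card_pos
  have hintg : ∀ (w : K) (q : ℚ), dminK S s w = ((q : ℚ) : WithTop ℚ) → ∃ n : ℤ, (c : ℚ) * q = n := by
    intro w q hq
    rw [← hdm w] at hq
    let x : N := ⟨r, hN r (hsub hr)⟩ - algebraMap K N w
    exact denom S N (x := x) hq
  let P : ℤ → Prop := fun n => ∃ (w : K) (q : ℚ), dminK S s w = ((q : ℚ) : WithTop ℚ) ∧ (c : ℚ) * q = n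
  have hbdd : ∃ b : ℤ, ∀ n : ℤ, P n → n ≤ b := by
    refine ⟨⌈(c : ℚ) * D⌉, ?_⟩
    rintro n ⟨w, q, hq, hn⟩
    have h1 := hlt w
    rw [hq, hD] at h1
    have h1' : q < D := by exact_mod_cast h1
    have h2 : (n : ℚ) ≤ (⌈(c : ℚ) * D⌉ : ℤ) := by
      rw [← hn]
      exact (mul_le_mul_of_nonneg_left h1'.le hcpos.le).trans (Int.le_ceil _)
    exact_mod_cast h2
  have hne : ∃ n, P n := by
    obtain ⟨q, hq⟩ := hfin 0
    obtain ⟨n, hn⟩ := hintg 0 q hq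
    exact ⟨n, 0, q, hq, hn⟩
  obtain ⟨n, ⟨w, ρ, hρ, hn⟩, hmax⟩ := Int.exists_greatest_of_bdd hbdd hne
  refine ⟨w, ρ, ?_, hρ⟩
  intro w'
  obtain ⟨q, hq⟩ := hfin w'
  obtain ⟨n', hn'⟩ := hintg w' q hq
  have h3 : (n' : ℚ) ≤ n := by exact_mod_cast hmax n' ⟨w', q, hq, hn'⟩
  rw [hq, hρ]
  rw [← hn, ← hn'] at h3
  exact_mod_cast le_of_mul_le_mul_left h3 hcpos

lemma card_image_orbit (N : IntermediateField K Kbar) [FiniteDimensional K N] {p : ℕ}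
    (hp : p.Prime) (B : Subgroup (N ≃ₐ[K] N)) [Fintype B] (hB : IsPGroup p B) (x : N) :
    ∃ m : ℕ, (Finset.univ.image (fun σ : B => (σ : N ≃ₐ[K] N) x)).card = p ^ m := by
  have : Fact p.Prime := ⟨hp⟩
  have hfin : Finite (MulAction.orbit B x) := Set.finite_range _ |>.to_subtype
  obtain ⟨m, hm⟩ := hB.card_orbit x
  refine ⟨m, ?_⟩
  have h : MulAction.orbit B x
      = ((Finset.univ.image (fun σ : B => (σ : N ≃ₐ[K] N) x) : Finset N) : Set N) := by
    ext z
    simp only [MulAction.mem_orbit_iff, Finset.coe_image, Finset.coe_univ, Set.image_univ,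
      Set.mem_range]
    exact Iff.rfl
  rw [← hm, h, Nat.card_coe_set_eq, Set.ncard_coe_finset]

end Clusters

section Main

lemma padicNorm_p_pow {p : ℕ} (hp : p.Prime) (m : ℕ) :
    padicNorm p ((p ^ m : ℕ) : ℚ) = ((p : ℚ) ^ m)⁻¹ := by
  have : Fact p.Prime := ⟨hp⟩
  induction m with
  | zero => simp
  | succ m ih =>
    rw [pow_succ, Nat.cast_mul, padicNorm.mul, ih, padicNorm.padicNorm_p_of_prime, pow_succ,
      mul_inv]

/-- Those elements of `Q` moving `r` by at least `D`. -/
def blockStab (S : Setup K Kbar) (N : IntermediateField K Kbar) (Q : Subgroup (N ≃ₐ[K] N))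
    (r : N) (D : WithTop ℚ) : Subgroup (N ≃ₐ[K] N) where
  carrier := {σ | σ ∈ Q ∧ D ≤ S.v ((σ r : N) - (r : Kbar))}
  one_mem' := ⟨Q.one_mem, by simp [S.v_zero]⟩
  mul_mem' := by
    rintro σ τ ⟨hσ, hσ'⟩ ⟨hτ, hτ'⟩
    refine ⟨Q.mul_mem hσ hτ, ?_⟩
    have h1 := v_conj S N σ (τ r - r)
    have h2 : D ≤ S.v (((σ (τ r - r) : N) : Kbar)) := by
      rw [h1]; push_cast; exact hτ'
    have h3 := S.le_v_add h2 hσ'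
    rw [map_sub] at h3
    push_cast at h3
    rw [sub_add_sub_cancel] at h3
    exact h3
  inv_mem' := by
    rintro σ ⟨hσ, hσ'⟩
    refine ⟨Q.inv_mem hσ, ?_⟩
    have h1 := v_conj S N σ⁻¹ (σ r - r)
    have h2 : σ⁻¹ (σ r) = r := by
      rw [← AlgEquiv.mul_apply, inv_mul_cancel]; rfl
    rw [map_sub, h2] at h1
    push_cast at h1
    rw [S.v_sub_comm, h1]
    exact hσ'

lemma mem_blockStab (S : Setup K Kbar) (N : IntermediateField K Kbar) (Q : Subgroup (N ≃ₐ[K] N))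
    (r : N) (D : WithTop ℚ) (σ : N ≃ₐ[K] N) :
    σ ∈ blockStab S N Q r D ↔ σ ∈ Q ∧ D ≤ S.v ((σ r : N) - (r : Kbar)) := Iff.rfl

/-- The key step: sizes of non-rational clusters are powers of `p`. -/
lemma card_pow_p (S : Setup K Kbar) {p : ℕ} (hp : p.Prime)
    (hres : ((0 : ℚ) : WithTop ℚ) < S.vK (p : K)) {f : K[X]} (hsep : f.Separable)
    (hAR : AlmostRational S f p) (s : Finset Kbar) (hcl : IsCluster S f s) (hs : 1 < s.card)
    (w : K) (ρ : ℚ) (hw : IsRationalCentre S s w) (hρ : dminK S s w = ((ρ : ℚ) : WithTop ℚ))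
    (hlt : ((ρ : ℚ) : WithTop ℚ) < depth S s) : ∃ m : ℕ, s.card = p ^ m := by
  have : Fact p.Prime := ⟨hp⟩
  obtain ⟨N, hfd, hgal, hN⟩ := exists_N S hsep
  obtain ⟨⟨r, hr⟩, z, δ, hsdef⟩ := hcl
  have hsub : s ⊆ rootFinset f := by rw [hsdef]; exact Finset.filter_subset _ _
  have hrv : S.v (r - algebraMap K Kbar w) = ((ρ : ℚ) : WithTop ℚ) := by
    rw [← hρ]; exact v_eq_dmin S s _ (by rw [← hρ] at hlt; exact hlt) hr
  -- membership in `s`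
  have hmem : ∀ x : Kbar, x ∈ rootFinset f → depth S s ≤ S.v (x - r) → x ∈ s := by
    intro x hx hxr
    have hz : ∀ y ∈ s, ((δ : ℚ) : WithTop ℚ) ≤ S.v (y - z) := by
      intro y hy
      rw [hsdef] at hy
      exact (Finset.mem_filter.1 hy).2
    have hδ : ((δ : ℚ) : WithTop ℚ) ≤ depth S s := by
      apply le_depth
      intro a ha b hb
      have := S.le_v_sub (hz a ha) (hz b hb)
      simpa using this
    rw [hsdef, Finset.mem_filter]
    refine ⟨hx, ?_⟩
    have := S.le_v_add (hδ.trans hxr) (hz r hr)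
    simpa using this
  -- the big cluster
  set t : Finset Kbar := (rootFinset f).filter (fun x => ((ρ : ℚ) : WithTop ℚ) < S.v (x - r)) with ht
  have hst : s ⊆ t := by
    intro x hx
    rw [ht, Finset.mem_filter]
    exact ⟨hsub hx, hlt.trans_le (depth_le S s hx hr)⟩
  have htcard : 1 < t.card := hs.trans_le (Finset.card_le_card hst)
  have htv : ∀ x ∈ t, ((ρ : ℚ) : WithTop ℚ) < S.v (x - r) := fun x hx => (Finset.mem_filter.1 hx).2
  have htdepth : ((ρ : ℚ) : WithTop ℚ) < depth S t := by
    unfold depth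
    rw [Finset.lt_inf_iff (WithTop.coe_lt_top _)]
    intro a ha
    rw [Finset.lt_inf_iff (WithTop.coe_lt_top _)]
    intro b hb
    have := S.lt_v_sub (htv a ha) (htv b hb)
    simpa using this
  obtain ⟨Dt, hDt⟩ := depth_exists S t htcard
  have htcl : IsCluster S f t := by
    refine ⟨⟨r, hst hr⟩, r, Dt, ?_⟩
    ext x
    rw [← hDt]
    constructor
    · intro hx
      exact Finset.mem_filter.2 ⟨(Finset.mem_filter.1 hx).1, depth_le S t hx (hst hr)⟩
    · intro hx
      obtain ⟨h1, h2⟩ := Finset.mem_filter.1 hx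
      rw [ht, Finset.mem_filter]
      exact ⟨h1, htdepth.trans_le h2⟩
  have htw : ∀ x ∈ t, S.v (x - algebraMap K Kbar w) = ((ρ : ℚ) : WithTop ℚ) := by
    intro x hx
    rw [← hrv]
    apply S.v_eq_of_lt
    rw [hrv, sub_sub_sub_cancel_right]
    exact htv x hx
  have htd : dminK S t w = ((ρ : ℚ) : WithTop ℚ) := by
    apply le_antisymm
    · rw [← hrv]
      exact dmin_le S t _ (hst hr)
    · exact Finset.le_inf fun x hx => (htw x hx).ge
  have htc : IsRationalCentre S t w := by
    intro w'
    rw [htd, ← hρ]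
    exact (Finset.inf_mono hst).trans (hw w')
  have htle : (t.card : ℚ) ≤ padicNorm p ρ := by
    by_contra hc
    push Not at hc
    have := hAR t htcl htcard w ρ htc htd hc
    rw [this] at htdepth
    exact lt_irrefl _ htdepth
  -- the group
  obtain ⟨Q, hQI, hQ, e, he, hcard⟩ := exists_Q S N hp
  have : Fintype Q := Fintype.ofFinite Q
  let r' : N := ⟨r, hN r (hsub hr)⟩
  let y : N := r' - algebraMap K N w
  have hyv : S.v (y : Kbar) = ((ρ : ℚ) : WithTop ℚ) := hrv
  have hy : y ≠ 0 := by
    intro h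
    apply S.ne_zero_of_v hyv
    simp [h]
  have hQwild : ∀ σ ∈ Q, ((ρ : ℚ) : WithTop ℚ) < S.v ((σ r' : N) - r) := by
    intro σ hσ
    obtain ⟨k, hk⟩ := hQ ⟨σ, hσ⟩
    have h1 : (⟨σ, hQI hσ⟩ : inertia S N) ^ p ^ k = 1 := by
      apply Subtype.ext
      have h0 := congrArg Q.subtype hk
      simpa using h0
    have h2 := wild S N hp hres ⟨σ, hQI hσ⟩ k h1 hy
    rw [chi_apply, rs_ratio_eq_one, hyv] at h2
    simp only [y, map_sub, AlgEquiv.commutes] at h2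
    push_cast at h2
    rw [sub_sub_sub_cancel_right] at h2
    exact h2
  let O : Finset N := Finset.univ.image (fun σ : Q => (σ : N ≃ₐ[K] N) r')
  obtain ⟨a, ha⟩ := card_image_orbit N hp Q hQ r'
  have hOc : O.card = p ^ a := ha
  let O' : Finset Kbar := O.image (fun x : N => (x : Kbar))
  have hO'c : O'.card = p ^ a := by
    rw [← hOc]
    exact Finset.card_image_of_injective _ Subtype.val_injective
  have hO't : O' ⊆ t := by
    intro x hx
    simp only [O', O, Finset.mem_image, Finset.mem_univ, true_and] at hx
    obtain ⟨_, ⟨σ, rfl⟩, rfl⟩ := hx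
    rw [ht, Finset.mem_filter]
    exact ⟨conj_root hsep.ne_zero N _ (hsub hr), hQwild σ σ.2⟩
  let Y : N := ∏ x ∈ O, (x - algebraMap K N w)
  have hYv : S.v (Y : Kbar) = ((((p ^ a : ℕ) : ℚ) * ρ : ℚ) : WithTop ℚ) := by
    have h1 : (Y : Kbar) = ∏ x ∈ O, ((x : Kbar) - algebraMap K Kbar w) := by
      simp only [Y]
      push_cast
      rfl
    rw [h1, S.v_prod, Finset.sum_congr rfl (g := fun _ => ((ρ : ℚ) : WithTop ℚ)),
      Finset.sum_const, hOc, nsmul_coe]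
    intro x hx
    exact htw _ (hO't (Finset.mem_image_of_mem _ hx))
  have hY : Y ≠ 0 := by
    intro h
    apply S.ne_zero_of_v hYv
    simp [h]
  have hYQ : ∀ σ ∈ Q, σ Y = Y := by
    intro σ hσ
    have hOσ : O.image (fun x => σ x) = O := by
      apply Finset.eq_of_subset_of_card_le
      · intro x hx
        simp only [O, Finset.mem_image, Finset.mem_univ, true_and] at hx ⊢
        obtain ⟨_, ⟨τ, rfl⟩, rfl⟩ := hx
        exact ⟨⟨σ, hσ⟩ * τ, rfl⟩
      · rw [Finset.card_image_of_injective _ σ.injective]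
    simp only [Y, map_prod, map_sub, AlgEquiv.commutes]
    conv_rhs => rw [← hOσ]
    rw [Finset.prod_image (fun x _ y _ h => σ.injective h)]
  have hnorm := padicNorm_le_of_fixed S N hp hres Q hQI hQ e he hcard hY hYQ hYv
  have hρle : padicNorm p ρ ≤ (p ^ a : ℕ) := by
    have hp0 : (0 : ℚ) < p := by exact_mod_cast hp.pos
    have hpa : (0 : ℚ) < (p : ℚ) ^ a := by positivity
    rw [padicNorm.mul, padicNorm_p_pow hp, inv_mul_le_iff₀ hpa, mul_one] at hnorm
    push_cast
    exact hnorm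
  have hO't' : O' = t := by
    apply Finset.eq_of_subset_of_card_le hO't
    rw [hO'c]
    exact_mod_cast htle.trans hρle
  -- the block
  let B := blockStab S N Q r' (depth S s)
  have hBQ : B ≤ Q := fun σ hσ => hσ.1
  have hB : IsPGroup p B := hQ.to_le hBQ
  have : Fintype B := Fintype.ofFinite B
  obtain ⟨m, hm⟩ := card_image_orbit N hp B hB r'
  refine ⟨m, ?_⟩
  rw [← hm, ← Finset.card_image_of_injective _ (Subtype.val_injective : Function.Injective
    (fun x : N => (x : Kbar)))]
  congr 1
  ext x
  simp only [Finset.mem_image, Finset.mem_univ, true_and]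
  constructor
  · intro hx
    have hxO : x ∈ O' := by rw [hO't']; exact hst hx
    simp only [O', O, Finset.mem_image, Finset.mem_univ, true_and] at hxO
    obtain ⟨_, ⟨σ, rfl⟩, rfl⟩ := hxO
    exact ⟨_, ⟨⟨σ, σ.2, depth_le S s hx hr⟩, rfl⟩, rfl⟩
  · rintro ⟨_, ⟨σ, rfl⟩, rfl⟩
    exact hmem _ (conj_root hsep.ne_zero N _ (hsub hr)) σ.2.2

/-- Valuation of the constant term of the monic polynomial with roots `r - w`. -/
lemma v_const (S : Setup K Kbar) (s : Finset Kbar) (z : Kbar) :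
    S.v ((∏ r ∈ s, (X - C (r - z)) : Kbar[X]).coeff 0) = ∑ r ∈ s, S.v (r - z) := by
  rw [coeff_zero_eq_eval_zero, eval_prod, S.v_prod]
  apply Finset.sum_congr rfl
  intro r _
  rw [eval_sub, eval_X, eval_C, zero_sub, S.v_neg]

lemma roots_h (s : Finset Kbar) (z : Kbar) :
    (∏ r ∈ s, (X - C (r - z)) : Kbar[X]).roots = s.val.map (fun r => r - z) := by
  have h : (∏ r ∈ s, (X - C (r - z)) : Kbar[X])
      = ((s.val.map (fun r => r - z)).map (fun a => X - C a)).prod := by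
    rw [Multiset.map_map]; rfl
  rw [h, roots_multiset_prod_X_sub_C]

end Main

/-- **Characterisation of almost rational cluster pictures.** `Σ_f` is almost rational iff
every proper cluster `s` satisfies (a) `d_s = ρ_s` (the smallest disc containing `s`
contains a rational point), or (b) after translating by some `w ∈ K` the elements of `s` are
exactly the roots (each of multiplicity one) of a monic polynomial with coefficients in
`K^s`, of `p`-power degree `|s|`, whose constant term `c` satisfies `|v(c)|_p ≥ 1`. -/
theorem almostRational_iff_disc_characterisation
    (S : Setup K Kbar)
    (p : ℕ) (hp : p.Prime) (hres : ((0 : ℚ) : WithTop ℚ) < S.vK (p : K))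
    (f : K[X]) (hsep : f.Separable) (hdeg : 1 ≤ f.natDegree) :
    AlmostRational S f p ↔
      ∀ s : Finset Kbar, IsCluster S f s → 1 < s.card →
        ((∃ w : K, dminK S s w = depth S s) ∨
         (∃ (w : K) (h : Polynomial Kbar), h.Monic ∧
            (∀ i : ℕ, h.coeff i ∈ separableClosure K Kbar) ∧
            h.roots = s.val.map (fun r => r - algebraMap K Kbar w) ∧
            h.natDegree = s.card ∧ (∃ m : ℕ, s.card = p ^ m) ∧
            ∃ cq : ℚ, S.v (h.coeff 0) = ((cq : ℚ) : WithTop ℚ) ∧ 1 ≤ padicNorm p cq)) := by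
  have hpf : Fact p.Prime := ⟨hp⟩
  have hp0 : (0 : ℚ) < p := by exact_mod_cast hp.pos
  constructor
  · intro hAR s hcl hs
    by_cases ha : ∃ w : K, dminK S s w = depth S s
    · exact Or.inl ha
    right
    have hsub : s ⊆ rootFinset f := by
      obtain ⟨_, z, δ, h⟩ := hcl
      rw [h]; exact Finset.filter_subset _ _
    obtain ⟨w, ρ, hw, hρ⟩ := exists_centre S hsep s hsub hs ha
    have hlt : dminK S s w < depth S s :=
      lt_of_le_of_ne (dmin_le_depth S s _) (fun h => ha ⟨w, h⟩)
    obtain ⟨m, hm⟩ := card_pow_p S hp hres hsep hAR s hcl hs w ρ hw hρ (hρ ▸ hlt)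
    have hle : (s.card : ℚ) ≤ padicNorm p ρ := by
      by_contra hc
      push Not at hc
      exact ha ⟨w, by rw [hAR s hcl hs w ρ hw hρ hc, hρ]⟩
    refine ⟨w, ∏ r ∈ s, (X - C (r - algebraMap K Kbar w)), monic_prod_of_monic _ _
      (fun r _ => monic_X_sub_C _), ?_, roots_h s _, ?_, ⟨m, hm⟩, (s.card : ℚ) * ρ, ?_, ?_⟩
    · have hlift : (∏ r ∈ s, (X - C (r - algebraMap K Kbar w)) : Kbar[X]) ∈
          lifts (algebraMap (separableClosure K Kbar) Kbar) := by
        apply Subsemiring.prod_mem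
        intro r hr
        rw [sub_eq_add_neg, ← C_neg]
        apply Subsemiring.add_mem _ (X_mem_lifts _)
        apply C'_mem_lifts
        have hr1 : r ∈ separableClosure K Kbar := by
          rw [mem_separableClosure_iff]
          exact hsep.of_dvd (minpoly.dvd K r ((mem_rootFinset hsep.ne_zero).1 (hsub hr)))
        have hr2 : -(r - algebraMap K Kbar w) ∈ separableClosure K Kbar :=
          neg_mem (sub_mem hr1 (IntermediateField.algebraMap_mem _ w))
        exact ⟨⟨_, hr2⟩, rfl⟩
      intro i
      rw [lifts_iff_coeff_lifts] at hlift
      obtain ⟨c, hc⟩ := hlift i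
      rw [← hc]
      exact c.2
    · rw [natDegree_prod_of_monic _ _ (fun r _ => monic_X_sub_C _)]
      simp only [natDegree_X_sub_C, Finset.sum_const, smul_eq_mul, mul_one]
    · rw [v_const, Finset.sum_congr rfl (g := fun _ => ((ρ : ℚ) : WithTop ℚ)),
        Finset.sum_const, nsmul_coe]
      intro r hr
      rw [← hρ]
      exact v_eq_dmin S s _ hlt hr
    · rw [padicNorm.mul, hm, padicNorm_p_pow hp]
      rw [hm] at hle
      push_cast at hle
      have hpm : (0 : ℚ) < (p : ℚ) ^ m := by positivity
      rw [← div_eq_inv_mul, le_div_iff₀ hpm, one_mul]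
      exact hle
  · intro H s hcl hs w ρ hw hρ hlt
    by_contra hne
    have hna : ∀ w' : K, dminK S s w' < depth S s := by
      intro w'
      apply lt_of_le_of_ne (dmin_le_depth S s _)
      intro h
      apply hne
      apply le_antisymm
      · rw [← h, ← hρ]; exact hw w'
      · rw [← hρ]; exact dmin_le_depth S s _
    rcases H s hcl hs with ⟨w', hw'⟩ | ⟨w', h, hmon, -, hroots, hdeg', ⟨m, hm⟩, cq, hcq, hcq1⟩
    · exact (hna w').ne hw'
    have hh : h = ∏ r ∈ s, (X - C (r - algebraMap K Kbar w')) := by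
      have h1 := prod_multiset_X_sub_C_of_monic_of_roots_card_eq hmon (by
        rw [hroots, Multiset.card_map, hdeg']; rfl)
      rw [← h1, hroots, Multiset.map_map]
      rfl
    obtain ⟨q, hq⟩ : ∃ q : ℚ, dminK S s w' = ((q : ℚ) : WithTop ℚ) :=
      ⟨_, (WithTop.coe_untop _ (hna w').ne_top).symm⟩
    rw [hh, v_const, Finset.sum_congr rfl (g := fun _ => ((q : ℚ) : WithTop ℚ)),
      Finset.sum_const, nsmul_coe] at hcq
    · have hcq' : (s.card : ℚ) * q = cq := by exact_mod_cast hcq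
      rw [← hcq', padicNorm.mul, hm, padicNorm_p_pow hp] at hcq1
      have hpm : (0 : ℚ) < (p : ℚ) ^ m := by positivity
      rw [← div_eq_inv_mul, le_div_iff₀ hpm, one_mul] at hcq1
      have hcard : (s.card : ℚ) ≤ padicNorm p q := by
        rw [hm]; push_cast; exact hcq1
      have hle : q ≤ ρ := by
        have := hw w'
        rw [hq, hρ] at this
        exact_mod_cast this
      rcases hle.eq_or_lt with heq | hlt'
      · rw [heq] at hcard
        exact absurd hlt (not_lt.2 hcard)
      · obtain ⟨r, hr⟩ : s.Nonempty := hcl.1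
        have h1 : S.v (r - algebraMap K Kbar w') = ((q : ℚ) : WithTop ℚ) := by
          rw [← hq]; exact v_eq_dmin S s _ (hna w') hr
        have h2 : S.v (r - algebraMap K Kbar w) = ((ρ : ℚ) : WithTop ℚ) := by
          rw [← hρ]; exact v_eq_dmin S s _ (hna w) hr
        have h3 : S.v (algebraMap K Kbar (w - w')) = ((q : ℚ) : WithTop ℚ) := by
          rw [← h1]
          apply S.v_eq_of_lt
          have h4 : algebraMap K Kbar (w - w') - (r - algebraMap K Kbar w')
              = -(r - algebraMap K Kbar w) := by
            rw [map_sub]; ring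
          rw [h4, S.v_neg, h1, h2]
          exact_mod_cast hlt'
        have hww : w - w' ≠ 0 := by
          intro h5
          apply S.ne_zero_of_v h3
          rw [h5, map_zero]
        obtain ⟨n, hn⟩ := S.v_base_int _ hww
        rw [h3] at hn
        have hqn : q = n := by exact_mod_cast hn
        have h6 : padicNorm p q ≤ 1 := by rw [hqn]; exact padicNorm.of_int n
        have h7 : (1 : ℚ) < s.card := by exact_mod_cast hs
        linarith
    · intro r hr
      rw [← hq]
      exact v_eq_dmin S s _ (hna w') hr

end ClusterPicture
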